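/- ∑_{(n,m)∈ℤ², (n,m)≠(0,0)} 1/(n² + 4m²)² = (7π²/24)·G, where G is Catalan's constant. -/

import Mathlib

open Real

/-- Catalan's constant `G = ∑_{n=0}^∞ (−1)ⁿ/(2n+1)²`. -/
noncomputable def catalanConst : ℝ := ∑' n : ℕ, (-1 : ℝ) ^ n / (2 * (n : ℝ) + 1) ^ 2

/-!
By Jacobi's two-square theorem the number of Gaussian integers of norm `n ≠ 0` is
`4 ∑_{d ∣ n} χ₄(d)`, so `∑_{z ≠ 0} N(z)⁻ˢ = 4 ζ(s) L(χ₄, s)`. Jacobi's theorem holds because both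
sides satisfy the same recurrence `f(pn) + χ₄(p) f(n/p) = (1 + χ₄(p)) f(n)` at every prime `p`: for
the divisor sum it is inclusion–exclusion on the divisors of `pn`, for the norm count it is
inclusion–exclusion on the multiples of the two Gaussian primes above `p`.

The sublattice `{a + 2bi}`, its mirror image `{2a + bi}` and `(1 + i)ℤ[i]` are the three sublattices
of index two in `ℤ[i]`. A point of `2ℤ[i]` lies in all three and any other point in exactly one.
Since multiplication by `1 + i` and by `2` scales the norm by `2` and `4`, this determines the sum
over `{a + 2bi}` from the sum over `ℤ[i]`. The theorem is the case `s = 2`, where `L(χ₄, 2) = G`.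
-/

open ZMod
open scoped LSeries.notation

section HeckeRelation

variable {R : Type*} [CommRing R] {χ f g : ℕ → R} {p n : ℕ}

/-- The relation satisfied at the primes by the coefficients of the Dirichlet series with Euler
product `∏ₚ (1 - (1 + χ p) p⁻ˢ + χ p p⁻²ˢ)⁻¹`, up to a scalar factor. The value `f (n / p)` is
read as `0` when `p` does not divide `n`; nothing is required of `f 0`. -/
def HeckeRelation (χ f : ℕ → R) : Prop :=
  ∀ ⦃p n : ℕ⦄, p.Prime → n ≠ 0 →
    f (p * n) + χ p * (if p ∣ n then f (n / p) else 0) = (1 + χ p) * f n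

theorem HeckeRelation.eq_mul {c : R} (hf : HeckeRelation χ f) (hg : HeckeRelation χ g)
    (h_one : f 1 = c * g 1) (hn : n ≠ 0) : f n = c * g n := by
  induction n using Nat.strong_induction_on with
  | _ n ih =>
    obtain rfl | hn1 := eq_or_ne n 1
    · exact h_one
    obtain ⟨p, hp, m, rfl⟩ := Nat.exists_prime_and_dvd hn1
    have hm : m ≠ 0 := right_ne_zero_of_mul hn
    have hlt : m < p * m := lt_mul_of_one_lt_left (Nat.pos_of_ne_zero hm) hp.one_lt
    have hfm := ih m hlt hm
    have hfdiv : (if p ∣ m then f (m / p) else 0) = c * (if p ∣ m then g (m / p) else 0) := by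
      split_ifs with hpm
      · exact ih (m / p) ((Nat.div_le_self m p).trans_lt hlt)
          (Nat.div_ne_zero_iff_of_dvd hpm |>.2 ⟨hm, hp.ne_zero⟩)
      · rw [mul_zero]
    linear_combination hf hp hm - c * hg hp hm + (1 + χ p) * hfm - χ p * hfdiv

theorem divisors_prime_mul (hp : p.Prime) (hn : n ≠ 0) :
    (p * n).divisors = n.divisors ∪ n.divisors.image (p * ·) := by
  ext d
  simp only [Finset.mem_union, Finset.mem_image, Nat.mem_divisors]
  constructor
  · rintro ⟨hd, -⟩
    by_cases hpd : p ∣ d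
    · obtain ⟨e, rfl⟩ := hpd
      exact .inr ⟨e, ⟨Nat.dvd_of_mul_dvd_mul_left hp.pos hd, hn⟩, rfl⟩
    · exact .inl ⟨((hp.coprime_iff_not_dvd.2 hpd).symm).dvd_of_dvd_mul_left hd, hn⟩
  · rintro (⟨hd, -⟩ | ⟨e, ⟨he, -⟩, rfl⟩)
    · exact ⟨hd.mul_left p, mul_ne_zero hp.ne_zero hn⟩
    · exact ⟨mul_dvd_mul_left p he, mul_ne_zero hp.ne_zero hn⟩

theorem divisors_inter_image_mul (hp : p ≠ 0) :
    n.divisors ∩ n.divisors.image (p * ·) =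
      if p ∣ n then (n / p).divisors.image (p * ·) else ∅ := by
  split_ifs with hpn
  · obtain ⟨m, rfl⟩ := hpn
    rw [Nat.mul_div_cancel_left m (Nat.pos_of_ne_zero hp)]
    ext d
    simp only [Finset.mem_inter, Finset.mem_image, Nat.mem_divisors]
    constructor
    · rintro ⟨⟨hd, hm⟩, e, -, rfl⟩
      exact ⟨e, ⟨(mul_dvd_mul_iff_left hp).1 hd, right_ne_zero_of_mul hm⟩, rfl⟩
    · rintro ⟨e, ⟨he, hm⟩, rfl⟩
      have hpm : p * m ≠ 0 := mul_ne_zero hp hm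
      exact ⟨⟨mul_dvd_mul_left p he, hpm⟩, e, ⟨he.mul_left p, hpm⟩, rfl⟩
  · refine Finset.eq_empty_of_forall_notMem fun d hd ↦ hpn ?_
    simp only [Finset.mem_inter, Finset.mem_image, Nat.mem_divisors] at hd
    obtain ⟨⟨hd, -⟩, e, -, rfl⟩ := hd
    exact (dvd_mul_right p e).trans hd

theorem heckeRelation_sum_divisors (hχ : ∀ m n, χ (m * n) = χ m * χ n) :
    HeckeRelation χ fun n ↦ ∑ d ∈ n.divisors, χ d := by
  intro p n hp hn
  have sum_image (m : ℕ) :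
      ∑ d ∈ m.divisors.image (p * ·), χ d = χ p * ∑ d ∈ m.divisors, χ d := by
    rw [Finset.sum_image (mul_right_injective₀ hp.ne_zero).injOn, Finset.mul_sum]
    simp only [hχ]
  have sum_inter : ∑ d ∈ n.divisors ∩ n.divisors.image (p * ·), χ d =
      χ p * (if p ∣ n then ∑ d ∈ (n / p).divisors, χ d else 0) := by
    rw [divisors_inter_image_mul hp.ne_zero]
    split_ifs
    · exact sum_image _
    · rw [Finset.sum_empty, mul_zero]
  beta_reduce
  rw [divisors_prime_mul hp hn, ← sum_inter, Finset.sum_union_inter, sum_image]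
  ring

end HeckeRelation

section NormCount

variable {w z : GaussianInt} {k n p : ℕ}

/-- The Gaussian integers of norm `n`, that is, the representations of `n` as an ordered sum of two
squares of integers. -/
def normFiber (n : ℕ) : Set GaussianInt := {z | z.norm = n}

theorem norm_eq_sq_add_sq (z : GaussianInt) : z.norm = z.re ^ 2 + z.im ^ 2 := by
  rw [Zsqrtd.norm_def]
  ring

theorem finite_normFiber (n : ℕ) : (normFiber n).Finite := by
  have hbox : (Set.Icc (-(n : ℤ)) n ×ˢ Set.Icc (-(n : ℤ)) n).Finite :=
    (Set.finite_Icc _ _).prod (Set.finite_Icc _ _)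
  refine (hbox.image fun q ↦ (⟨q.1, q.2⟩ : GaussianInt)).subset fun z hz ↦ ?_
  have hz' : z.re ^ 2 + z.im ^ 2 = n := by rw [← norm_eq_sq_add_sq]; exact hz
  have abs_le_sq (a : ℤ) : |a| ≤ a ^ 2 := by
    simpa only [sq_abs] using Int.le_self_sq |a|
  refine ⟨(z.re, z.im), ⟨abs_le.1 ?_, abs_le.1 ?_⟩, rfl⟩
  · linarith [abs_le_sq z.re, sq_nonneg z.im]
  · linarith [abs_le_sq z.im, sq_nonneg z.re]

theorem normFiber_one : normFiber 1 = {⟨1, 0⟩, ⟨-1, 0⟩, ⟨0, 1⟩, ⟨0, -1⟩} := by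
  ext ⟨a, b⟩
  simp only [normFiber, Set.mem_ofPred_eq, norm_eq_sq_add_sq, Nat.cast_one,
    Set.mem_insert_iff, Set.mem_singleton_iff, Zsqrtd.mk.injEq]
  constructor
  · intro h
    have ha : a ≤ 1 := by nlinarith
    have ha' : -1 ≤ a := by nlinarith
    have hb : b ≤ 1 := by nlinarith
    have hb' : -1 ≤ b := by nlinarith
    interval_cases a <;> interval_cases b <;> simp_all
  · rintro (⟨rfl, rfl⟩ | ⟨rfl, rfl⟩ | ⟨rfl, rfl⟩ | ⟨rfl, rfl⟩) <;> norm_num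

theorem ncard_normFiber_one : (normFiber 1).ncard = 4 := by
  have hcoe : normFiber 1 =
      (({⟨1, 0⟩, ⟨-1, 0⟩, ⟨0, 1⟩, ⟨0, -1⟩} : Finset GaussianInt) : Set GaussianInt) := by
    rw [normFiber_one]
    push_cast
    rfl
  rw [hcoe, Set.ncard_coe_finset]
  rfl

theorem ncard_sep_dvd_normFiber_mul (hk : k ≠ 0) (hw : w.norm = k) (n : ℕ) :
    {z ∈ normFiber (k * n) | w ∣ z}.ncard = (normFiber n).ncard := by
  have hw0 : w ≠ 0 := by
    rintro rfl
    exact hk (by simpa using hw.symm)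
  have himage : {z ∈ normFiber (k * n) | w ∣ z} = (w * ·) '' normFiber n := by
    ext z
    constructor
    · rintro ⟨hz, x, rfl⟩
      refine ⟨x, mul_left_cancel₀ (Nat.cast_ne_zero.2 hk : (k : ℤ) ≠ 0) ?_, rfl⟩
      rw [← hw, ← Zsqrtd.norm_mul, hw, ← Nat.cast_mul]
      exact hz
    · rintro ⟨x, hx : x.norm = n, rfl⟩
      refine ⟨?_, dvd_mul_right w x⟩
      change (w * x).norm = _
      rw [Zsqrtd.norm_mul, hw, hx, Nat.cast_mul]
  rw [himage, Set.ncard_image_of_injective _ (mul_right_injective₀ hw0)]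

theorem ncard_sep_natCast_dvd_normFiber_mul (hp : p ≠ 0) (n : ℕ) :
    {z ∈ normFiber (p * n) | (p : GaussianInt) ∣ z}.ncard =
      if p ∣ n then (normFiber (n / p)).ncard else 0 := by
  have hnorm : (p : GaussianInt).norm = (p * p : ℕ) := by simp
  split_ifs with hpn
  · obtain ⟨m, rfl⟩ := hpn
    rw [Nat.mul_div_cancel_left m (Nat.pos_of_ne_zero hp), ← mul_assoc,
      ncard_sep_dvd_normFiber_mul (mul_ne_zero hp hp) hnorm]
  · suffices {z ∈ normFiber (p * n) | (p : GaussianInt) ∣ z} = ∅ by rw [this, Set.ncard_empty]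
    refine Set.eq_empty_of_forall_notMem ?_
    rintro _ ⟨hz : Zsqrtd.norm _ = _, x, rfl⟩
    rw [Zsqrtd.norm_mul, hnorm, Nat.cast_mul, Nat.cast_mul, mul_assoc] at hz
    have hn : (p : ℤ) * x.norm = n := mul_left_cancel₀ (Nat.cast_ne_zero.2 hp) hz
    exact hpn (Int.natCast_dvd_natCast.1 ⟨_, hn.symm⟩)

theorem prime_of_norm_eq_prime (hp : p.Prime) (hw : w.norm = p) : Prime w := by
  rw [← irreducible_iff_prime]
  refine ⟨fun hunit ↦ hp.ne_one ?_, fun a b hab ↦ ?_⟩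
  · rwa [← Zsqrtd.norm_eq_one_iff, hw, Int.natAbs_natCast] at hunit
  · have hmul : a.norm.natAbs * b.norm.natAbs = p := by
      rw [← Int.natAbs_mul, ← Zsqrtd.norm_mul, ← hab, hw, Int.natAbs_natCast]
    rw [← Zsqrtd.norm_eq_one_iff, ← Zsqrtd.norm_eq_one_iff]
    exact (Nat.prime_mul_iff.1 (hmul ▸ hp)).symm.imp And.right And.right

theorem natCast_eq_mul_star (hw : w.norm = p) : (p : GaussianInt) = w * star w := by
  rw [← Zsqrtd.norm_eq_mul_conj, hw, Int.cast_natCast]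

theorem dvd_or_star_dvd_of_mem_normFiber (hw : Prime w) (hwp : w ∣ (p : GaussianInt))
    (hz : z ∈ normFiber (p * n)) : w ∣ z ∨ star w ∣ z := by
  have hmul : w ∣ z * star z := by
    rw [← natCast_eq_mul_star hz, Nat.cast_mul]
    exact hwp.mul_right _
  refine (hw.dvd_or_dvd hmul).imp_right fun h ↦ ?_
  simpa only [starRingEnd_apply, star_star] using map_dvd (starRingEnd GaussianInt) h

theorem not_dvd_star_of_norm_eq_odd_prime (hp : p.Prime) (hp2 : p ≠ 2) (hw : w.norm = p) :
    ¬ w ∣ star w := by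
  intro hdvd
  have hpZ : Prime (p : ℤ) := Nat.prime_iff_prime_int.1 hp
  have hsum : (p : ℤ) = w.re ^ 2 + w.im ^ 2 := by rw [← hw, norm_eq_sq_add_sq]
  have hw_dvd : w ∣ ((2 * w.re : ℤ) : GaussianInt) := by
    have htrace : ((2 * w.re : ℤ) : GaussianInt) = w + star w := by
      ext <;> simp [two_mul]
    rw [htrace]
    exact dvd_add dvd_rfl hdvd
  have hp_dvd : (p : ℤ) ∣ 2 * w.re := by
    obtain ⟨x, hx⟩ := hw_dvd
    have hnorm := congrArg Zsqrtd.norm hx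
    rw [Zsqrtd.norm_intCast, Zsqrtd.norm_mul, hw] at hnorm
    exact or_self_iff.1 (hpZ.dvd_or_dvd ⟨_, hnorm⟩)
  have hre : (p : ℤ) ∣ w.re := by
    refine (hpZ.dvd_or_dvd hp_dvd).resolve_left fun h ↦ hp2 ?_
    exact (Nat.prime_dvd_prime_iff_eq hp Nat.prime_two).1 (by exact_mod_cast h)
  have him : (p : ℤ) ∣ w.im := by
    refine hpZ.dvd_of_dvd_pow (n := 2) ?_
    rw [← dvd_add_right (dvd_pow hre two_ne_zero), ← hsum]
  have hsq : (p : ℤ) * p ∣ p * 1 := by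
    rw [mul_one]
    nth_rw 3 [hsum]
    rw [sq, sq]
    exact dvd_add (mul_dvd_mul hre hre) (mul_dvd_mul him him)
  exact hpZ.not_isUnit (isUnit_of_dvd_one ((mul_dvd_mul_iff_left hpZ.ne_zero).1 hsq))

theorem ncard_normFiber_two_mul (n : ℕ) : (normFiber (2 * n)).ncard = (normFiber n).ncard := by
  have hw : (⟨1, 1⟩ : GaussianInt).norm = (2 : ℕ) := by rw [norm_eq_sq_add_sq]; norm_num
  have hstar : (⟨1, 1⟩ : GaussianInt) ∣ star ⟨1, 1⟩ := ⟨⟨0, -1⟩, by ext <;> simp⟩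
  rw [← ncard_sep_dvd_normFiber_mul two_ne_zero hw n, Set.sep_eq_self_iff_mem_true.2]
  intro z hz
  have := dvd_or_star_dvd_of_mem_normFiber (prime_of_norm_eq_prime Nat.prime_two hw)
    ⟨_, natCast_eq_mul_star hw⟩ hz
  simpa using this.elim id hstar.trans

theorem ncard_normFiber_mul_of_mod_four_eq_three (hp : p.Prime) (hp4 : p % 4 = 3) (n : ℕ) :
    (normFiber (p * n)).ncard = if p ∣ n then (normFiber (n / p)).ncard else 0 := by
  have : Fact p.Prime := ⟨hp⟩
  rw [← ncard_sep_natCast_dvd_normFiber_mul hp.ne_zero n, Set.sep_eq_self_iff_mem_true.2]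
  intro z hz
  simpa using dvd_or_star_dvd_of_mem_normFiber
    (GaussianInt.prime_of_nat_prime_of_mod_four_eq_three p hp4) dvd_rfl hz

theorem ncard_normFiber_mul_of_mod_four_eq_one (hp : p.Prime) (hp4 : p % 4 = 1) (n : ℕ) :
    (normFiber (p * n)).ncard + (if p ∣ n then (normFiber (n / p)).ncard else 0) =
      2 * (normFiber n).ncard := by
  have : Fact p.Prime := ⟨hp⟩
  obtain ⟨a, b, hab⟩ := Nat.Prime.sq_add_sq (p := p) (by omega)
  obtain ⟨w, hw⟩ : ∃ w : GaussianInt, w.norm = p :=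
    ⟨⟨a, b⟩, by rw [norm_eq_sq_add_sq, ← hab]; push_cast; rfl⟩
  have hwprime := prime_of_norm_eq_prime hp hw
  have hpw := natCast_eq_mul_star hw
  have hunion : {z ∈ normFiber (p * n) | w ∣ z} ∪ {z ∈ normFiber (p * n) | star w ∣ z} =
      normFiber (p * n) := by
    rw [← Set.sep_or, Set.sep_eq_self_iff_mem_true]
    intro z hz
    simpa using dvd_or_star_dvd_of_mem_normFiber hwprime ⟨_, hpw⟩ hz
  have hinter : {z ∈ normFiber (p * n) | w ∣ z} ∩ {z ∈ normFiber (p * n) | star w ∣ z} =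
      {z ∈ normFiber (p * n) | (p : GaussianInt) ∣ z} := by
    rw [← Set.sep_and]
    refine Set.sep_ext_iff.2 fun z _ ↦ ⟨?_, fun h ↦ ?_⟩
    · rintro ⟨hwz, x, rfl⟩
      rw [hpw, mul_comm w]
      exact mul_dvd_mul_left _ ((hwprime.dvd_or_dvd hwz).resolve_left
        (not_dvd_star_of_norm_eq_odd_prime hp (by omega) hw))
    · rw [hpw] at h
      exact ⟨dvd_of_mul_right_dvd h, dvd_of_mul_left_dvd h⟩
  have hfin (u : GaussianInt) : {z ∈ normFiber (p * n) | u ∣ z}.Finite :=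
    (finite_normFiber _).sep _
  rw [← ncard_sep_natCast_dvd_normFiber_mul hp.ne_zero, ← hinter]
  nth_rw 1 [← hunion]
  rw [Set.ncard_union_add_ncard_inter _ _ (hfin w) (hfin (star w)),
    ncard_sep_dvd_normFiber_mul hp.ne_zero hw,
    ncard_sep_dvd_normFiber_mul hp.ne_zero ((Zsqrtd.norm_conj w).trans hw), two_mul]

theorem heckeRelation_ncard_normFiber :
    HeckeRelation (fun n ↦ χ₄ n) fun n ↦ ((normFiber n).ncard : ℤ) := by
  intro p n hp _
  have hmod : p = 2 ∨ p % 4 = 1 ∨ p % 4 = 3 := by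
    have := hp.eq_two_or_odd
    omega
  rcases hmod with rfl | hp4 | hp4
  · have hχ : χ₄ (2 : ℕ) = 0 := by decide
    simp only [ncard_normFiber_two_mul, hχ, zero_mul, add_zero, one_mul]
  · have := ncard_normFiber_mul_of_mod_four_eq_one hp hp4 n
    simp only [χ₄_nat_one_mod_four hp4, one_mul]
    exact_mod_cast this
  · simp only [χ₄_nat_three_mod_four hp4, ncard_normFiber_mul_of_mod_four_eq_three hp hp4]
    push_cast
    ring

theorem ncard_normFiber_eq_four_mul_sum_divisors (hn : n ≠ 0) :
    ((normFiber n).ncard : ℤ) = 4 * ∑ d ∈ n.divisors, χ₄ d :=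
  heckeRelation_ncard_normFiber.eq_mul
    (heckeRelation_sum_divisors fun m n ↦ by rw [Nat.cast_mul, map_mul])
    (by simp [ncard_normFiber_one]) hn

end NormCount

section DirichletSeries

variable {s : ℂ}

theorem LSeriesHasSum_sum_divisors {f : ℕ → ℂ} {a : ℂ} (hs : 1 < s.re)
    (hf : LSeriesHasSum f s a) :
    LSeriesHasSum (fun n ↦ ∑ d ∈ n.divisors, f d) s (riemannZeta s * a) := by
  have hconv : 1 ⍟ f = fun n ↦ ∑ d ∈ n.divisors, f d := by
    ext n
    simp only [LSeries.convolution_def, Pi.one_apply, one_mul]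
    exact Nat.sum_divisorsAntidiagonal' fun _ d ↦ f d
  exact hconv ▸ (LSeriesHasSum_one hs).convolution hf

theorem LSeriesSummable_χ₄ (hs : 1 < s.re) : LSeriesSummable ↗χ₄ s := by
  refine LSeriesSummable_of_bounded_of_one_lt_re (m := 1) (fun n _ ↦ ?_) hs
  have hbound : ∀ x : ZMod 4, |χ₄ x| ≤ 1 := by decide
  rw [Complex.norm_intCast]
  exact_mod_cast hbound n

theorem LSeriesHasSum_ncard_normFiber (hs : 1 < s.re) :
    LSeriesHasSum (fun n ↦ ((normFiber n).ncard : ℂ)) s (4 * (riemannZeta s * L ↗χ₄ s)) := by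
  refine (LSeriesHasSum_congr s _ fun {n} hn ↦ ?_).1
    ((LSeriesHasSum_sum_divisors hs (LSeriesSummable_χ₄ hs).LSeriesHasSum).smul 4)
  simpa using (congrArg (Int.cast : ℤ → ℂ) (ncard_normFiber_eq_four_mul_sum_divisors hn)).symm

theorem LSeries_χ₄_two : L ↗χ₄ 2 = catalanConst := by
  have hinj : Function.Injective fun k : ℕ ↦ 2 * k + 1 := fun a b h ↦ by simpa using h
  have hsupp : Function.support (LSeries.term ↗χ₄ 2) ⊆ Set.range fun k : ℕ ↦ 2 * k + 1 := by
    intro n hn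
    obtain ⟨k, rfl | rfl⟩ := n.even_or_odd'
    · have hχ : χ₄ ((2 * k : ℕ) : ZMod 4) = 0 := by
        rw [χ₄_nat_eq_if_mod_four, if_pos (by omega)]
      refine absurd ?_ hn
      simp only [LSeries.term_def, hχ, Int.cast_zero, zero_div, ite_self]
    · exact ⟨k, rfl⟩
  rw [LSeries, ← hinj.tsum_eq hsupp, catalanConst, Complex.ofReal_tsum]
  refine tsum_congr fun k ↦ ?_
  rw [LSeries.term_of_ne_zero (by omega), χ₄_eq_neg_one_pow (by omega),
    show (2 * k + 1) / 2 = k by omega, Complex.cpow_ofNat]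
  push_cast
  rfl

end DirichletSeries

theorem hasSum_fiber_of_finite {α β M : Type*} [AddCommMonoid M] [TopologicalSpace M]
    {φ : α → β} {b : β} (hb : (φ ⁻¹' {b}).Finite) (F : β → M) :
    HasSum (fun x : {x // φ x = b} ↦ F (φ x)) ((φ ⁻¹' {b}).ncard • F b) := by
  have : Fintype {x // φ x = b} := hb.fintype
  have hconst : (fun x : {x // φ x = b} ↦ F (φ x)) = fun _ ↦ F b := funext fun x ↦ by rw [x.2]
  have hcard : (φ ⁻¹' {b}).ncard = Fintype.card {x // φ x = b} :=
    Nat.card_eq_fintype_card (α := {x // φ x = b})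
  rw [hconst, hcard, ← Finset.card_univ, ← Finset.sum_const]
  exact hasSum_fintype _

theorem hasSum_comp_of_finite_fibers {α β E : Type*} [NormedAddCommGroup E] [CompleteSpace E]
    {φ : α → β} {F : β → E} {a : E} (hφ : ∀ b, (φ ⁻¹' {b}).Finite)
    (hnorm : Summable fun b ↦ (φ ⁻¹' {b}).ncard • ‖F b‖)
    (hF : HasSum (fun b ↦ (φ ⁻¹' {b}).ncard • F b) a) : HasSum (F ∘ φ) a := by
  let e := Equiv.sigmaFiberEquiv φ
  have hsummable : Summable (F ∘ φ ∘ e) := by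
    refine .of_norm ((summable_sigma_of_nonneg fun _ ↦ norm_nonneg _).2 ⟨fun b ↦ ?_, ?_⟩)
    · exact (hasSum_fiber_of_finite (hφ b) (‖F ·‖)).summable
    · exact hnorm.congr fun b ↦ (hasSum_fiber_of_finite (hφ b) (‖F ·‖)).tsum_eq.symm
  rw [← e.hasSum_iff]
  exact hF.sigma_of_hasSum (fun b ↦ hasSum_fiber_of_finite (hφ b) F) hsummable

/-- The summand `N(z)⁻ˢ` of the Epstein zeta function of `ℤ[i]`, equal to `0` at `z = 0` unless
`s = 0`. -/
noncomputable def epsteinTerm (s : ℂ) (z : GaussianInt) : ℂ := ((z.norm : ℂ) ^ s)⁻¹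

section Epstein

variable {s : ℂ}

theorem epsteinTerm_mul (s : ℂ) (w z : GaussianInt) :
    epsteinTerm s (w * z) = epsteinTerm s w * epsteinTerm s z := by
  have hnonneg (x : GaussianInt) : (0 : ℝ) ≤ x.norm := Int.cast_nonneg (GaussianInt.norm_nonneg x)
  simp only [epsteinTerm, Zsqrtd.norm_mul, Int.cast_mul, ← Complex.ofReal_intCast,
    Complex.mul_cpow_ofReal_nonneg (hnonneg w) (hnonneg z), mul_inv]

theorem hasSum_epsteinTerm (hs : 1 < s.re) :
    HasSum (epsteinTerm s) (4 * (riemannZeta s * L ↗χ₄ s)) := by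
  have hs0 : s ≠ 0 := Complex.ne_zero_of_one_lt_re hs
  let φ (z : GaussianInt) : ℕ := z.norm.natAbs
  have hφ (n : ℕ) : φ ⁻¹' {n} = normFiber n := by
    ext z
    have := GaussianInt.norm_nonneg z
    simp only [φ, normFiber, Set.mem_preimage, Set.mem_singleton_iff, Set.mem_ofPred_eq]
    omega
  have hterm (n : ℕ) : LSeries.term (fun n ↦ ((normFiber n).ncard : ℂ)) s n =
      (φ ⁻¹' {n}).ncard • ((n : ℂ) ^ s)⁻¹ := by
    rw [LSeries.term_of_ne_zero' hs0, hφ, nsmul_eq_mul, div_eq_mul_inv]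
  have hsum := LSeriesHasSum_ncard_normFiber hs
  have hcomp : epsteinTerm s = (fun n : ℕ ↦ ((n : ℂ) ^ s)⁻¹) ∘ φ := by
    ext z
    simp only [epsteinTerm, Function.comp_apply, φ, GaussianInt.natCast_natAbs_norm]
  rw [hcomp]
  refine hasSum_comp_of_finite_fibers (fun n ↦ hφ n ▸ finite_normFiber n) ?_ ?_
  · refine hsum.summable.norm.congr fun n ↦ ?_
    rw [hterm, nsmul_eq_mul, norm_mul, Complex.norm_natCast, nsmul_eq_mul]
  · exact hsum.congr_fun fun n ↦ (hterm n).symm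

end Epstein

section IndexTwoSublattices

theorem range_mk_re_two_mul_im :
    Set.range (fun z : GaussianInt ↦ (⟨z.re, 2 * z.im⟩ : GaussianInt)) = {z | Even z.im} := by
  ext z
  constructor
  · rintro ⟨x, rfl⟩
    exact even_two_mul _
  · intro hz
    obtain ⟨b, hb⟩ := even_iff_exists_two_mul.1 hz
    exact ⟨⟨z.re, b⟩, Zsqrtd.ext rfl hb.symm⟩

theorem range_mk_two_mul_re_im :
    Set.range (fun z : GaussianInt ↦ (⟨2 * z.re, z.im⟩ : GaussianInt)) = {z | Even z.re} := by
  ext z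
  constructor
  · rintro ⟨x, rfl⟩
    exact even_two_mul _
  · intro hz
    obtain ⟨a, ha⟩ := even_iff_exists_two_mul.1 hz
    exact ⟨⟨a, z.im⟩, Zsqrtd.ext ha.symm rfl⟩

theorem range_one_add_I_mul :
    Set.range ((⟨1, 1⟩ : GaussianInt) * ·) = {z | Even (z.re + z.im)} := by
  ext z
  constructor
  · rintro ⟨x, rfl⟩
    exact ⟨x.re, by simp⟩
  · intro hz
    obtain ⟨c, hc⟩ := even_iff_exists_two_mul.1 hz
    exact ⟨⟨c, c - z.re⟩, Zsqrtd.ext (by simp) (by simp; omega)⟩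

theorem range_gaussianInt_two_mul :
    Set.range ((2 : GaussianInt) * ·) = {z | Even z.re ∧ Even z.im} := by
  ext z
  constructor
  · rintro ⟨x, rfl⟩
    simp
  · rintro ⟨hre, him⟩
    obtain ⟨a, ha⟩ := even_iff_exists_two_mul.1 hre
    obtain ⟨b, hb⟩ := even_iff_exists_two_mul.1 him
    exact ⟨⟨a, b⟩, Zsqrtd.ext (by simp [ha]) (by simp [hb])⟩

theorem indicator_add_indicator_add_indicator_eq {E : Type*} [AddCommGroup E]
    (f : GaussianInt → E) (z : GaussianInt) :
    {z | Even z.im}.indicator f z + {z | Even z.re}.indicator f z +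
        {z | Even (z.re + z.im)}.indicator f z =
      f z + 2 • {z | Even z.re ∧ Even z.im}.indicator f z := by
  by_cases hre : Even z.re <;> by_cases him : Even z.im <;>
    simp [Set.indicator, hre, him, Int.even_add, two_nsmul, add_assoc]

theorem tsum_index_two_sublattices {E : Type*} [AddCommGroup E] [UniformSpace E]
    [IsUniformAddGroup E] [CompleteSpace E] [T2Space E] {f : GaussianInt → E} (hf : Summable f) :
    ∑' z : GaussianInt, f ⟨z.re, 2 * z.im⟩ + ∑' z : GaussianInt, f ⟨2 * z.re, z.im⟩ +
        ∑' z : GaussianInt, f (⟨1, 1⟩ * z) =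
      ∑' z, f z + 2 • ∑' z, f (2 * z) := by
  have tsum_comp {g : GaussianInt → GaussianInt} (hg : g.Injective) :
      ∑' z, f (g z) = ∑' z, (Set.range g).indicator f z := by
    rw [← tsum_subtype, tsum_range f hg]
  rw [tsum_comp fun x y h ↦ by simp_all [Zsqrtd.ext_iff], range_mk_re_two_mul_im,
    tsum_comp fun x y h ↦ by simp_all [Zsqrtd.ext_iff], range_mk_two_mul_re_im,
    tsum_comp (mul_right_injective₀ (by simp [Zsqrtd.ext_iff])), range_one_add_I_mul,
    tsum_comp (mul_right_injective₀ two_ne_zero), range_gaussianInt_two_mul,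
    ← (hf.indicator _).tsum_add (hf.indicator _),
    ← ((hf.indicator _).add (hf.indicator _)).tsum_add (hf.indicator _),
    ← (hf.indicator _).tsum_const_smul, ← hf.tsum_add ((hf.indicator _).const_smul 2)]
  exact tsum_congr (indicator_add_indicator_add_indicator_eq f)

end IndexTwoSublattices

theorem hasSum_epsteinTerm_re_two_mul_im {s : ℂ} (hs : 1 < s.re) :
    HasSum (fun z : GaussianInt ↦ epsteinTerm s ⟨z.re, 2 * z.im⟩)
      (2 * (1 - (2 ^ s)⁻¹ + 2 * (4 ^ s)⁻¹) * (riemannZeta s * L ↗χ₄ s)) := by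
  have hsum := hasSum_epsteinTerm hs
  have hmirror : ∑' z : GaussianInt, epsteinTerm s ⟨2 * z.re, z.im⟩ =
      ∑' z : GaussianInt, epsteinTerm s ⟨z.re, 2 * z.im⟩ := by
    let swap : GaussianInt ≃ GaussianInt :=
      Function.Involutive.toPerm (fun z ↦ ⟨z.im, z.re⟩) fun _ ↦ rfl
    rw [← swap.tsum_eq]
    refine tsum_congr fun z ↦ ?_
    change epsteinTerm s ⟨2 * z.im, z.re⟩ = epsteinTerm s ⟨z.re, 2 * z.im⟩
    simp only [epsteinTerm, norm_eq_sq_add_sq, add_comm]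
  have hone_add_I : epsteinTerm s ⟨1, 1⟩ = (2 ^ s)⁻¹ := by
    norm_num [epsteinTerm, norm_eq_sq_add_sq]
  have htwo : epsteinTerm s 2 = (4 ^ s)⁻¹ := by
    norm_num [epsteinTerm, norm_eq_sq_add_sq]
  have hsublattices := tsum_index_two_sublattices hsum.summable
  simp only [epsteinTerm_mul, tsum_mul_left, hmirror, hsum.tsum_eq, hone_add_I, htwo,
    nsmul_eq_mul, Nat.cast_ofNat] at hsublattices
  have hinj : Function.Injective fun z : GaussianInt ↦ (⟨z.re, 2 * z.im⟩ : GaussianInt) :=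
    fun x y h ↦ by simp_all [Zsqrtd.ext_iff]
  refine (hsum.summable.comp_injective hinj).hasSum_iff.2 ?_
  simp only [Function.comp_apply]
  linear_combination hsublattices / 2

theorem stmt_16_general {s : ℂ} (hs : 1 < s.re) :
    HasSum (fun p : {p : ℤ × ℤ // p ≠ 0} ↦
        ((((p : ℤ × ℤ).1 : ℂ) ^ 2 + 4 * ((p : ℤ × ℤ).2 : ℂ) ^ 2) ^ s)⁻¹)
      (2 * (1 - (2 ^ s)⁻¹ + 2 * (4 ^ s)⁻¹) * (riemannZeta s * L ↗χ₄ s)) := by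
  let toGaussianInt (p : {p : ℤ × ℤ // p ≠ 0}) : GaussianInt := ⟨p.1.1, p.1.2⟩
  have hinj : toGaussianInt.Injective := fun p q h ↦
    Subtype.ext (Prod.ext (congrArg Zsqrtd.re h) (congrArg Zsqrtd.im h))
  have hzero (z : GaussianInt) (hz : z ∉ Set.range toGaussianInt) :
      epsteinTerm s ⟨z.re, 2 * z.im⟩ = 0 := by
    obtain rfl : z = 0 := by
      by_contra hne
      refine hz ⟨⟨(z.re, z.im), fun h ↦ hne ?_⟩, rfl⟩
      exact Zsqrtd.ext (congrArg Prod.fst h) (congrArg Prod.snd h)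
    simp [epsteinTerm, norm_eq_sq_add_sq, Complex.ne_zero_of_one_lt_re hs]
  refine ((hinj.hasSum_iff hzero).2 (hasSum_epsteinTerm_re_two_mul_im hs)).congr_fun fun p ↦ ?_
  simp only [Function.comp_apply, toGaussianInt, epsteinTerm, norm_eq_sq_add_sq]
  push_cast
  ring_nf

theorem stmt_16 :
    ∑' p : {p : ℤ × ℤ // p ≠ 0},
        ((((p : ℤ × ℤ).1 : ℝ) ^ 2 + 4 * ((p : ℤ × ℤ).2 : ℝ) ^ 2) ^ 2)⁻¹ =
      7 * π ^ 2 / 24 * catalanConst := by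
  have hsum := (stmt_16_general (s := 2) (by norm_num)).tsum_eq
  simp only [Complex.cpow_ofNat, riemannZeta_two, LSeries_χ₄_two] at hsum
  apply Complex.ofReal_injective
  push_cast
  rw [hsum]
  ring
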